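/- Under the hypotheses of the nonautonomous shadowing theorem with the additional assumption that the system is $N$-periodic ($F_{n+N}=F_n$ for all $n$), there exists $L>0$ such that for all sufficiently small $\varepsilon>0$: every $N$-periodic sequence $(y_n)_{n\in\mathbb{Z}}$ (i.e. $y_{n+N}=y_n$) with $\sup_n\|y_{n+1}-F_n(y_n)\|\le L\varepsilon$ is $\varepsilon$-shadowed by an $N$-periodic true trajectory: there exists $(x_n)$ with $x_{n+1}=F_n(x_n)$, $x_{n+N}=x_n$ for all $n$, and $\sup_n\|x_n-y_n\|\le\varepsilon$. -/

import Mathlib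

/-- The sequence `A` of bounded operators admits an exponential dichotomy: there exist
an evolution family `E`, projections `P` commuting with the dynamics and constants
`C, lam > 0` with the usual exponential bounds. -/
def ExpDichotomy {X : Type*} [NormedAddCommGroup X] [NormedSpace ℝ X]
    (A : ℤ → X →L[ℝ] X) : Prop :=
  ∃ (E : ℤ → ℤ → X →L[ℝ] X) (P : ℤ → X →L[ℝ] X) (C lam : ℝ),
    0 < C ∧ 0 < lam ∧
    (∀ n, E n n = ContinuousLinearMap.id ℝ X) ∧
    (∀ m n, E (m + 1) n = (A m).comp (E m n)) ∧
    (∀ m, (P m).comp (P m) = P m) ∧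
    (∀ m, (P (m + 1)).comp (A m) = (A m).comp (P m)) ∧
    (∀ m n, n ≤ m → ‖(E m n).comp (P n)‖ ≤ C * Real.exp (-lam * ((m - n : ℤ) : ℝ))) ∧
    (∀ m n, m ≤ n → ‖(E m n).comp (ContinuousLinearMap.id ℝ X - P n)‖ ≤
      C * Real.exp (-lam * ((n - m : ℤ) : ℝ)))

/-!
The `N`-periodic sequences form a Banach space on which the trajectory equation
`xᵢ₊₁ = Fᵢ xᵢ` is solved near a pseudotrajectory `y` by the quantitative inverse function theorem.
What this requires is a right inverse of the linearised difference operator at `y` whose norm is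
bounded independently of `y`. Each linearisation has an exponential dichotomy, hence an invertible
difference operator, but robustness alone says nothing about uniformity of the constants. If the
norms of the inverses were unbounded, a sequence of bad periodic linearisations could be glued
together, each of them repeated on arbitrarily long blocks, into a single sequence still within
`c` of `A`. Its dichotomy gives one a priori bound, which passes to each of its periodic pieces by
cutting off periodic sequences with slowly varying tents, a contradiction.

`ExpDichotomy` provides only right inverses of the operators of the sequence. Operators in the
`c`-ball around an invertible one are invertible because the ball is connected and, among right
invertible operators, the invertible ones form an open and closed set.
-/

open Filter Topology Set Metric
open scoped NNReal

section Invertibility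

variable {R : Type*} [NormedRing R] [HasSummableGeomSeries R]

theorem isUnit_of_isPreconnected_of_exists_mul_eq_one {s : Set R} (hs : IsPreconnected s)
    (hinv : ∀ x ∈ s, ∃ y, x * y = 1) {a b : R} (ha : a ∈ s) (hau : IsUnit a) (hb : b ∈ s) :
    IsUnit b := by
  refine hs.subset_of_closure_inter_subset Units.isOpen ⟨a, ha, hau⟩ ?_ hb
  rintro x ⟨hx, hxs⟩
  obtain ⟨y, hxy⟩ := hinv x hxs
  have hnear : ∀ᶠ z in 𝓝 x, IsUnit (z * y) :=
    (continuous_mul_const y).continuousAt.eventually_mem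
      (Units.isOpen.mem_nhds (by simp [hxy]))
  obtain ⟨z, hz, hzy⟩ := (mem_closure_iff_frequently.1 hx |>.and_eventually hnear).exists
  have hy : IsUnit y := (IsUnit.mul_left_iff hz).1 hzy
  exact (IsUnit.mul_right_iff hy).1 (by rw [hxy]; exact isUnit_one)

end Invertibility

theorem holderWith_of_norm_sub_le_mul_rpow {V W : Type*} [SeminormedAddCommGroup V]
    [SeminormedAddCommGroup W] {g : V → W} {C r : ℝ≥0}
    (hg : ∀ x y, ‖g x - g y‖ ≤ C * ‖x - y‖ ^ (r : ℝ)) : HolderWith C r g := fun x y => by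
  rw [edist_nndist, edist_nndist, ← ENNReal.coe_rpow_of_nonneg _ r.coe_nonneg, ← ENNReal.coe_mul,
    ENNReal.coe_le_coe, ← NNReal.coe_le_coe, NNReal.coe_mul, NNReal.coe_rpow, coe_nndist,
    coe_nndist, dist_eq_norm, dist_eq_norm]
  exact hg x y

theorem eq_zero_of_norm_le_mul_exp {V : Type*} [NormedAddCommGroup V] {v : V} {K lam : ℝ}
    (hlam : 0 < lam) (hv : ∀ i : ℕ, ‖v‖ ≤ K * Real.exp (-lam * i)) : v = 0 := by
  have hlim : Tendsto (fun i : ℕ => K * Real.exp (-lam * i)) atTop (𝓝 (K * 0)) :=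
    (Real.tendsto_exp_atBot.comp
      (tendsto_natCast_atTop_atTop.const_mul_atTop_of_neg (neg_lt_zero.2 hlam))).const_mul K
  rw [mul_zero] at hlim
  exact norm_le_zero_iff.1 (ge_of_tendsto' hlim hv)

theorem summable_exp_neg_mul_abs_intCast {lam : ℝ} (hlam : 0 < lam) :
    Summable fun k : ℤ => Real.exp (-lam * |(k : ℝ)|) := by
  have hnat : Summable fun i : ℕ => Real.exp (-lam * i) := by
    simpa only [mul_comm] using Real.summable_exp_nat_mul_iff.2 (neg_lt_zero.2 hlam)
  exact Summable.of_nat_of_neg (by simpa using hnat) (by simpa using hnat)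

section DifferenceEquations

variable {X : Type*} [NormedAddCommGroup X] [NormedSpace ℝ X] {B : ℤ → X →L[ℝ] X}

section Evolution

variable {E : ℤ → ℤ → X →L[ℝ] X} {x : ℤ → X}

theorem evolution_apply_of_le (hid : ∀ n, E n n = ContinuousLinearMap.id ℝ X)
    (hE : ∀ m n, E (m + 1) n = (B m).comp (E m n)) (hx : ∀ n, x (n + 1) = B n (x n)) {m n : ℤ}
    (hmn : m ≤ n) : E n m (x m) = x n := by
  induction n, hmn using Int.leInduction with
  | base => rw [hid, ContinuousLinearMap.id_apply]
  | succ n _ ih => rw [hE, ContinuousLinearMap.comp_apply, ih, hx]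

theorem evolution_apply_of_ge (hid : ∀ n, E n n = ContinuousLinearMap.id ℝ X)
    (hE : ∀ m n, E (m + 1) n = (B m).comp (E m n)) (hinj : ∀ n, Function.Injective (B n))
    (hx : ∀ n, x (n + 1) = B n (x n)) {m n : ℤ} (hnm : n ≤ m) : E n m (x m) = x n := by
  induction n, hnm using Int.leInductionDown with
  | base => rw [hid, ContinuousLinearMap.id_apply]
  | pred n _ ih =>
    apply hinj (n - 1)
    rw [← hx, ← ContinuousLinearMap.comp_apply, ← hE, sub_add_cancel, ih]

end Evolution

theorem ExpDichotomy.exists_mul_eq_one (h : ExpDichotomy B) (m : ℤ) :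
    ∃ R : X →L[ℝ] X, B m * R = 1 := by
  obtain ⟨E, -, -, -, -, -, hid, hE, -⟩ := h
  exact ⟨E m (m + 1), (hE m (m + 1)).symm.trans (hid (m + 1))⟩

theorem ExpDichotomy.eq_zero_of_bounded (h : ExpDichotomy B)
    (hinj : ∀ n, Function.Injective (B n)) {x : ℤ → X} {S : ℝ} (hS : ∀ n, ‖x n‖ ≤ S)
    (hx : ∀ n, x (n + 1) = B n (x n)) : x = 0 := by
  obtain ⟨E, P, C, lam, -, hlam, hid, hE, -, hP, hstable, hunstable⟩ := h
  have hPx : ∀ n, P n (x n) = 0 := fun n => by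
    have hPx_solution : ∀ n, P (n + 1) (x (n + 1)) = B n (P n (x n)) := fun n => by
      rw [hx]
      exact DFunLike.congr_fun (hP n) (x n)
    refine eq_zero_of_norm_le_mul_exp (K := C * S) hlam fun i => ?_
    have hPxn : P n (x n) = (E n (n - i)).comp (P (n - i)) (x (n - i)) :=
      (evolution_apply_of_le (x := fun n => P n (x n)) hid hE hPx_solution
        (sub_le_self n (Int.natCast_nonneg i))).symm
    rw [hPxn, mul_right_comm]
    refine ContinuousLinearMap.le_of_opNorm_le_of_le _ ?_ (hS _)
    simpa using hstable n (n - i) (sub_le_self n (Int.natCast_nonneg i))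
  funext n
  refine eq_zero_of_norm_le_mul_exp (K := C * S) hlam fun i => ?_
  have hxn : x n = (E n (n + i)).comp (ContinuousLinearMap.id ℝ X - P (n + i)) (x (n + i)) := by
    simp [hPx, evolution_apply_of_ge hid hE hinj hx]
  rw [hxn, mul_right_comm]
  refine ContinuousLinearMap.le_of_opNorm_le_of_le _ ?_ (hS _)
  simpa using hunstable n (n + i) (by simp)

theorem ExpDichotomy.exists_green_kernel (h : ExpDichotomy B) :
    ∃ (G : ℤ → ℤ → X →L[ℝ] X) (g : ℤ → ℝ), Summable g ∧ (∀ n k, ‖G n k‖ ≤ g (k - n)) ∧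
      ∀ n k, G (n + 1) k - (B n).comp (G n k) = if k = n + 1 then 1 else 0 := by
  obtain ⟨E, P, C, lam, -, hlam, hid, hE, -, -, hstable, hunstable⟩ := h
  refine ⟨fun n k => if k ≤ n then (E n k).comp (P k)
      else -(E n k).comp (ContinuousLinearMap.id ℝ X - P k),
    fun j => C * Real.exp (-lam * |(j : ℝ)|),
    (summable_exp_neg_mul_abs_intCast hlam).mul_left C, fun n k => ?_, fun n k => ?_⟩
  · dsimp only
    split_ifs with hk
    · rw [← Int.cast_abs, abs_of_nonpos (sub_nonpos.2 hk), neg_sub]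
      exact hstable n k hk
    · rw [← Int.cast_abs, abs_of_pos (sub_pos.2 (not_le.1 hk)), norm_neg]
      exact hunstable n k (not_le.1 hk).le
  · dsimp only
    rcases lt_trichotomy k (n + 1) with hk | rfl | hk
    · rw [if_pos hk.le, if_pos (Int.lt_add_one_iff.1 hk), if_neg hk.ne, hE,
        ContinuousLinearMap.comp_assoc, sub_self]
    · rw [if_pos le_rfl, if_neg (by simp), if_pos rfl, ContinuousLinearMap.comp_neg,
        ← ContinuousLinearMap.comp_assoc, ← hE, hid, ContinuousLinearMap.id_comp,
        ContinuousLinearMap.id_comp, sub_neg_eq_add, add_sub_cancel]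
      rfl
    · rw [if_neg hk.not_ge, if_neg (by omega), if_neg hk.ne', hE, ContinuousLinearMap.comp_neg,
        ContinuousLinearMap.comp_assoc, sub_self]

theorem exists_bounded_solution_of_green_kernel [CompleteSpace X] {G : ℤ → ℤ → X →L[ℝ] X}
    {g : ℤ → ℝ} (hg : Summable g) (hGg : ∀ n k, ‖G n k‖ ≤ g (k - n))
    (hG : ∀ n k, G (n + 1) k - (B n).comp (G n k) = if k = n + 1 then 1 else 0)
    {z : ℤ → X} {δ : ℝ} (hz : ∀ n, ‖z n‖ ≤ δ) :
    ∃ x : ℤ → X, (∀ n, ‖x n‖ ≤ (∑' j, g j) * δ) ∧ ∀ n, x (n + 1) - B n (x n) = z n := by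
  have hmajorant : ∀ n, HasSum (fun k => g (k - n) * δ) ((∑' j, g j) * δ) := fun n =>
    ((Equiv.subRight n).hasSum_iff.2 hg.hasSum).mul_right δ
  have hterm : ∀ n k, ‖G n k (z (k - 1))‖ ≤ g (k - n) * δ := fun n k =>
    (G n k).le_of_opNorm_le_of_le (hGg n k) (hz _)
  have hsum : ∀ n, Summable fun k => G n k (z (k - 1)) := fun n =>
    Summable.of_norm_bounded (hmajorant n).summable (hterm n)
  refine ⟨fun n => ∑' k, G n k (z (k - 1)),
    fun n => tsum_of_norm_bounded (hmajorant n) (hterm n), fun n => ?_⟩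
  calc ∑' k, G (n + 1) k (z (k - 1)) - B n (∑' k, G n k (z (k - 1)))
    _ = ∑' k, (G (n + 1) k - (B n).comp (G n k)) (z (k - 1)) := by
      rw [(B n).map_tsum (hsum n), ← (hsum (n + 1)).tsum_sub ((B n).summable (hsum n))]
      rfl
    _ = (G (n + 1) (n + 1) - (B n).comp (G n (n + 1))) (z (n + 1 - 1)) :=
      tsum_eq_single _ fun k hk => by rw [hG, if_neg hk, zero_apply]
    _ = z n := by rw [hG, if_pos rfl, add_sub_cancel_right, one_apply_eq_self]

theorem ExpDichotomy.exists_bounded_solution [CompleteSpace X] (h : ExpDichotomy B) :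
    ∃ K : ℝ, ∀ (z : ℤ → X) (δ : ℝ), (∀ n, ‖z n‖ ≤ δ) →
      ∃ x : ℤ → X, (∀ n, ‖x n‖ ≤ K * δ) ∧ ∀ n, x (n + 1) - B n (x n) = z n := by
  obtain ⟨G, g, hg, hGg, hG⟩ := h.exists_green_kernel
  exact ⟨∑' j, g j, fun z δ hz => exists_bounded_solution_of_green_kernel hg hGg hG hz⟩

/-- The difference operator `(xₙ) ↦ (xₙ₊₁ - Bₙ xₙ)` is bounded below by `1 / K` on bounded
sequences. The sup norms are replaced by arbitrary upper bounds, so that no supremum of a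
possibly unbounded family occurs. -/
def HasAprioriBound (B : ℤ → X →L[ℝ] X) (K : ℝ) : Prop :=
  ∀ (x : ℤ → X) (S δ : ℝ), (∀ n, ‖x n‖ ≤ S) → (∀ n, ‖x (n + 1) - B n (x n)‖ ≤ δ) →
    ∀ n, ‖x n‖ ≤ K * δ

theorem ExpDichotomy.exists_hasAprioriBound [CompleteSpace X] (h : ExpDichotomy B)
    (hinj : ∀ n, Function.Injective (B n)) : ∃ K, HasAprioriBound B K := by
  obtain ⟨K, hK⟩ := h.exists_bounded_solution
  refine ⟨K, fun x S δ hS hδ n => ?_⟩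
  obtain ⟨w, hw, hwx⟩ := hK _ δ hδ
  have hxw : (fun n => x n - w n) = 0 :=
    h.eq_zero_of_bounded hinj
      (fun n => (norm_sub_le _ _).trans (add_le_add (hS n) (hw n)))
      (fun n => by rw [map_sub, sub_eq_sub_iff_sub_eq_sub, hwx])
  rw [sub_eq_zero.1 (congrFun hxw n)]
  exact hw n

/-- Every sequence of operators at uniform distance at most `c` from `A` admits an exponential
dichotomy. -/
def RobustExpDichotomy (A : ℤ → X →L[ℝ] X) (c : ℝ) : Prop :=
  ∀ B : ℤ → X →L[ℝ] X, (∀ n, ‖A n - B n‖ ≤ c) → ExpDichotomy B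

variable {A : ℤ → X →L[ℝ] X} {c : ℝ}

theorem RobustExpDichotomy.isUnit_of_norm_sub_le [CompleteSpace X]
    (h : RobustExpDichotomy A c) {m : ℤ} (hA : IsUnit (A m)) {T : X →L[ℝ] X}
    (hT : ‖A m - T‖ ≤ c) : IsUnit T := by
  have hc : 0 ≤ c := (norm_nonneg _).trans hT
  have hball : ∀ T ∈ closedBall (A m) c, ∃ R, T * R = 1 := fun T hT => by
    have hdich : ExpDichotomy (Function.update A m T) := h _ fun n => by
      obtain rfl | hn := eq_or_ne n m
      · rwa [Function.update_self, norm_sub_rev, ← mem_closedBall_iff_norm]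
      · rwa [Function.update_of_ne hn, sub_self, norm_zero]
    simpa only [Function.update_self] using hdich.exists_mul_eq_one m
  exact isUnit_of_isPreconnected_of_exists_mul_eq_one (convex_closedBall (A m) c).isPreconnected
    hball (mem_closedBall_self hc) hA (by rwa [mem_closedBall_iff_norm, norm_sub_rev])

theorem RobustExpDichotomy.injective_of_norm_sub_le [CompleteSpace X]
    (h : RobustExpDichotomy A c) {m : ℤ} (hA : IsUnit (A m)) {T : X →L[ℝ] X}
    (hT : ‖A m - T‖ ≤ c) : Function.Injective T :=
  (ContinuousLinearMap.isUnit_iff_bijective.1 (h.isUnit_of_norm_sub_le hA hT)).injective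

end DifferenceEquations

section Cyclic

variable {N : ℕ}

theorem exists_zmod_of_periodic {α : Type*} {g : ℤ → α} (hg : Function.Periodic g N) :
    ∃ γ : ZMod N → α, (fun n : ℤ => γ n) = g := by
  refine ⟨fun i => g i.cast, funext fun n => ?_⟩
  simpa only [ZMod.coe_intCast, Int.cast_id, mul_comm, Int.emod_add_mul_ediv] using
    (hg.int_mul (n / N) (n % N)).symm

variable {X : Type*} [NormedAddCommGroup X] [NormedSpace ℝ X]

/-- The map `(xᵢ) ↦ (xᵢ₊₁ - Fᵢ xᵢ)` on `N`-periodic sequences, whose zeros are the `N`-periodic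
trajectories of `F`. Such sequences are encoded as functions on `ZMod N`, so that they form a
Banach space with the sup norm. -/
def cyclicDefect (F : ZMod N → X → X) (x : ZMod N → X) : ZMod N → X :=
  fun i => x (i + 1) - F i (x i)

/-- `cyclicDefect` of a family of linear maps, as a bounded operator. -/
def cyclicDifference (B : ZMod N → X →L[ℝ] X) : (ZMod N → X) →L[ℝ] (ZMod N → X) :=
  ContinuousLinearMap.pi fun i =>
    ContinuousLinearMap.proj (R := ℝ) (φ := fun _ : ZMod N => X) (i + 1) -
      (B i).comp (ContinuousLinearMap.proj i)

theorem cyclicDifference_apply (B : ZMod N → X →L[ℝ] X) (x : ZMod N → X) (i : ZMod N) :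
    cyclicDifference B x i = x (i + 1) - B i (x i) := rfl

theorem ExpDichotomy.cyclicDifference_surjective [CompleteSpace X] [NeZero N]
    {B : ZMod N → X →L[ℝ] X} (h : ExpDichotomy fun n : ℤ => B n)
    (hinj : ∀ i, Function.Injective (B i)) : Function.Surjective (cyclicDifference B) := by
  intro z
  obtain ⟨K, hK⟩ := h.exists_bounded_solution
  obtain ⟨x, hx, hxz⟩ := hK (fun n => z n) ‖z‖ fun n => norm_le_pi_norm z n
  have hper : (fun n => x (n + N) - x n) = 0 :=
    h.eq_zero_of_bounded (fun n => hinj n)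
      (fun n => (norm_sub_le _ _).trans (add_le_add (hx _) (hx _)))
      (fun n => by
        have hshift := hxz (n + N)
        simp only [Int.cast_add, Int.cast_natCast, CharP.cast_eq_zero, add_zero] at hshift
        rw [map_sub, sub_eq_sub_iff_sub_eq_sub, hxz, ← hshift, add_right_comm])
  obtain ⟨ξ, rfl⟩ := exists_zmod_of_periodic fun n => sub_eq_zero.1 (congrFun hper n)
  refine ⟨ξ, funext (ZMod.intCast_surjective.forall.2 fun n => ?_)⟩
  simpa [cyclicDifference_apply] using hxz n

end Cyclic

section Gluing

/-- The piecewise linear cutoff with value `1` at `q`, supported in `|j - q| < ℓ`. -/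
noncomputable def tent (q : ℤ) (ℓ : ℝ) (j : ℤ) : ℝ := max (1 - |(j - q : ℝ)| / ℓ) 0

theorem tent_nonneg (q : ℤ) (ℓ : ℝ) (j : ℤ) : 0 ≤ tent q ℓ j := le_max_right _ _

theorem tent_self (q : ℤ) (ℓ : ℝ) : tent q ℓ q = 1 := by simp [tent]

theorem tent_le_one (q : ℤ) {ℓ : ℝ} (hℓ : 0 ≤ ℓ) (j : ℤ) : tent q ℓ j ≤ 1 :=
  max_le (sub_le_self 1 (by positivity)) zero_le_one

theorem tent_eq_zero {q : ℤ} {ℓ : ℝ} (hℓ : 0 < ℓ) {j : ℤ} (hj : ℓ ≤ |(j - q : ℝ)|) :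
    tent q ℓ j = 0 :=
  max_eq_right (sub_nonpos.2 ((one_le_div hℓ).2 hj))

theorem abs_tent_add_one_sub_le (q : ℤ) {ℓ : ℝ} (hℓ : 0 < ℓ) (j : ℤ) :
    |tent q ℓ (j + 1) - tent q ℓ j| ≤ 1 / ℓ := by
  refine (abs_max_sub_max_le_abs _ _ _).trans ?_
  rw [sub_sub_sub_cancel_left, ← sub_div, abs_div, abs_of_pos hℓ]
  gcongr
  refine (abs_abs_sub_abs_le _ _).trans_eq ?_
  simp

variable {X : Type*} [NormedAddCommGroup X] [NormedSpace ℝ X]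

theorem norm_tent_smul_sub_le (T : X →L[ℝ] X) (q : ℤ) {ℓ : ℝ} (hℓ : 0 < ℓ) (j : ℤ) {v w : X}
    {δ S : ℝ} (hδ : ‖w - T v‖ ≤ δ) (hS : ‖v‖ ≤ S) :
    ‖tent q ℓ (j + 1) • w - T (tent q ℓ j • v)‖ ≤ δ + 1 / ℓ * (‖T‖ * S) := by
  have hdefect : ‖tent q ℓ (j + 1) • (w - T v)‖ ≤ δ := by
    rw [norm_smul, Real.norm_of_nonneg (tent_nonneg _ _ _)]
    exact (mul_le_of_le_one_left (norm_nonneg _) (tent_le_one q hℓ.le _)).trans hδ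
  have hslope : ‖(tent q ℓ (j + 1) - tent q ℓ j) • T v‖ ≤ 1 / ℓ * (‖T‖ * S) := by
    rw [norm_smul, Real.norm_eq_abs]
    gcongr
    · exact abs_tent_add_one_sub_le q hℓ j
    · exact T.le_opNorm_of_le hS
  calc ‖tent q ℓ (j + 1) • w - T (tent q ℓ j • v)‖
    _ = ‖tent q ℓ (j + 1) • (w - T v) + (tent q ℓ (j + 1) - tent q ℓ j) • T v‖ := by
      rw [map_smul]
      congr 1
      module
    _ ≤ δ + 1 / ℓ * (‖T‖ * S) := norm_add_le_of_le hdefect hslope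

theorem exists_constant_on_long_intervals :
    ∃ κ : ℤ → ℕ, ∀ k ℓ : ℕ, ∃ a : ℤ, ∀ j ∈ Icc a (a + ℓ), κ j = k := by
  -- `Nat.sqrt` equals `s` on `[s², s² + 2s]`, and `s = Nat.pair k ℓ` is at least `ℓ`.
  refine ⟨fun j => (Nat.unpair (Nat.sqrt j.toNat)).1, fun k ℓ =>
    ⟨(Nat.pair k ℓ * Nat.pair k ℓ : ℕ), fun j hj => ?_⟩⟩
  obtain ⟨t, rfl⟩ := Int.le.dest hj.1
  have ht : t ≤ Nat.pair k ℓ + Nat.pair k ℓ := by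
    have := Nat.right_le_pair k ℓ
    have := hj.2
    omega
  dsimp only
  rw [← Nat.cast_add, Int.toNat_natCast, Nat.sqrt_add_eq _ ht, Nat.unpair_pair]

variable {N : ℕ} [NeZero N]

theorem HasAprioriBound.norm_le_of_eq_on_interval {B : ℤ → X →L[ℝ] X} {K : ℝ}
    (h : HasAprioriBound B K) {B₀ : ZMod N → X →L[ℝ] X} {ℓ : ℕ} (hℓ : 0 < ℓ) {a : ℤ}
    (hB : ∀ j ∈ Icc a (a + (2 * ℓ + N : ℕ)), B j = B₀ j) (u : ZMod N → X) :
    ‖u‖ ≤ K * (‖cyclicDifference B₀ u‖ + 1 / ℓ * (‖B₀‖ * ‖u‖)) := by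
  have hℓ' : (0 : ℝ) < ℓ := Nat.cast_pos.2 hℓ
  refine (pi_norm_le_iff_of_nonempty _).2 (ZMod.intCast_surjective.forall.2 fun p => ?_)
  have hper : Function.Periodic (fun n : ℤ => u n) N := fun n => by simp
  obtain ⟨q, hq, hpq⟩ := hper.exists_mem_Ico (mod_cast NeZero.pos N) p (a + ℓ)
  have hBtent : ∀ j, B j (tent q ℓ j • u j) = B₀ j (tent q ℓ j • u j) := fun j => by
    by_cases hj : (ℓ : ℝ) ≤ |(j - q : ℝ)|
    · rw [tent_eq_zero hℓ' hj, zero_smul, map_zero, map_zero]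
    · have hj' : |j - q| < (ℓ : ℤ) := by exact_mod_cast not_le.1 hj
      rw [hB j]
      rw [mem_Ico] at hq
      rw [abs_lt] at hj'
      constructor <;> push_cast <;> linarith
  have hbound := h (fun j => tent q ℓ j • u j) ‖u‖
    (‖cyclicDifference B₀ u‖ + 1 / ℓ * (‖B₀‖ * ‖u‖))
    (fun j => by
      rw [norm_smul, Real.norm_of_nonneg (tent_nonneg _ _ _)]
      exact (mul_le_of_le_one_left (norm_nonneg _) (tent_le_one q hℓ'.le j)).trans
        (norm_le_pi_norm u j))
    (fun j => by
      rw [hBtent]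
      have hdefect : ‖u (j + 1 : ℤ) - B₀ j (u j)‖ ≤ ‖cyclicDifference B₀ u‖ := by
        simpa [cyclicDifference_apply] using norm_le_pi_norm (cyclicDifference B₀ u) j
      refine (norm_tent_smul_sub_le (B₀ j) q hℓ' j hdefect (norm_le_pi_norm u j)).trans ?_
      gcongr
      exact norm_le_pi_norm B₀ j) q
  rw [hpq]
  simpa [tent_self] using hbound

theorem HasAprioriBound.norm_le_of_eq_on_long_intervals {B : ℤ → X →L[ℝ] X} {K : ℝ}
    (h : HasAprioriBound B K) {B₀ : ZMod N → X →L[ℝ] X}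
    (hB : ∀ ℓ : ℕ, ∃ a : ℤ, ∀ j ∈ Icc a (a + ℓ), B j = B₀ j) (u : ZMod N → X) :
    ‖u‖ ≤ K * ‖cyclicDifference B₀ u‖ := by
  have hlim : Tendsto
      (fun ℓ : ℕ => K * (‖cyclicDifference B₀ u‖ + 1 / (ℓ : ℝ) * (‖B₀‖ * ‖u‖))) atTop
      (𝓝 (K * (‖cyclicDifference B₀ u‖ + 0 * (‖B₀‖ * ‖u‖)))) :=
    ((tendsto_one_div_atTop_nhds_zero_nat.mul_const _).const_add _).const_mul K
  rw [zero_mul, add_zero] at hlim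
  refine ge_of_tendsto hlim ((eventually_gt_atTop 0).mono fun ℓ hℓ => ?_)
  obtain ⟨a, ha⟩ := hB (2 * ℓ + N)
  exact h.norm_le_of_eq_on_interval hℓ ha u

variable [CompleteSpace X] {A : ℤ → X →L[ℝ] X} {c : ℝ}

theorem RobustExpDichotomy.exists_norm_le_mul_norm_cyclicDifference
    (h : RobustExpDichotomy A c) (hA : ∀ n, IsUnit (A n)) :
    ∃ K : ℝ, ∀ B : ZMod N → X →L[ℝ] X, (∀ n : ℤ, ‖A n - B n‖ ≤ c) →
      ∀ u, ‖u‖ ≤ K * ‖cyclicDifference B u‖ := by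
  by_contra! hcon
  choose B hB u hu using fun k : ℕ => hcon k
  obtain ⟨κ, hκ⟩ := exists_constant_on_long_intervals
  let glued : ℤ → X →L[ℝ] X := fun n => B (κ n) n
  have hglued : ∀ n, ‖A n - glued n‖ ≤ c := fun n => hB (κ n) n
  obtain ⟨K, hK⟩ := (h glued hglued).exists_hasAprioriBound fun n =>
    h.injective_of_norm_sub_le (hA n) (hglued n)
  obtain ⟨k, hk⟩ := exists_nat_ge K
  have hle : ‖u k‖ ≤ K * ‖cyclicDifference (B k) (u k)‖ :=
    hK.norm_le_of_eq_on_long_intervals (fun ℓ => (hκ k ℓ).imp fun a ha j hj => by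
      simp only [glued, ha j hj]) (u k)
  exact (hu k).not_ge (hle.trans (by gcongr))

theorem RobustExpDichotomy.exists_nonlinearRightInverse
    (h : RobustExpDichotomy A c) (hA : ∀ n, IsUnit (A n)) :
    ∃ K : ℝ≥0, 0 < K ∧ ∀ B : ZMod N → X →L[ℝ] X, (∀ n : ℤ, ‖A n - B n‖ ≤ c) →
      ∃ R : (cyclicDifference B).NonlinearRightInverse, R.nnnorm = K := by
  obtain ⟨K, hK⟩ := h.exists_norm_le_mul_norm_cyclicDifference (N := N) hA
  refine ⟨max K.toNNReal 1, by positivity, fun B hB => ?_⟩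
  have hinj : ∀ i, Function.Injective (B i) := ZMod.intCast_surjective.forall.2 fun n =>
    h.injective_of_norm_sub_le (hA n) (hB n)
  obtain ⟨R, hR⟩ := ((h _ hB).cyclicDifference_surjective hinj).hasRightInverse
  refine ⟨⟨R, max K.toNNReal 1, fun z => ?_, hR⟩, rfl⟩
  calc ‖R z‖ ≤ K * ‖z‖ := by simpa only [hR z] using hK B hB (R z)
    _ ≤ (max K.toNNReal 1 : ℝ≥0) * ‖z‖ := by
      gcongr
      exact (Real.le_coe_toNNReal K).trans (NNReal.coe_le_coe.2 (le_max_left _ _))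

end Gluing

section Shadowing

variable {X : Type*} [NormedAddCommGroup X] [NormedSpace ℝ X] {N : ℕ} [NeZero N]
  {F : ZMod N → X → X} {F' : ZMod N → X → X →L[ℝ] X}

theorem approximatesLinearOn_cyclicDefect (hF : ∀ i x, HasFDerivAt (F i) (F' i x) x)
    {y : ZMod N → X} {ε : ℝ} {η : ℝ≥0}
    (hη : ∀ i, ∀ x ∈ closedBall (y i) ε, ‖F' i x - F' i (y i)‖ ≤ η) :
    ApproximatesLinearOn (cyclicDefect F) (cyclicDifference fun i => F' i (y i))
      (closedBall y ε) η := by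
  intro u hu v hv
  refine (pi_norm_le_iff_of_nonempty _).2 fun i => ?_
  have hmem : ∀ w ∈ closedBall y ε, w i ∈ closedBall (y i) ε := fun w hw =>
    (dist_le_pi_dist w y i).trans hw
  have hFi : ‖F i (u i) - F i (v i) - F' i (y i) (u i - v i)‖ ≤ η * ‖u i - v i‖ :=
    (convex_closedBall (y i) ε).norm_image_sub_le_of_norm_hasFDerivWithin_le'
      (fun x _ => (hF i x).hasFDerivWithinAt) (hη i) (hmem v hv) (hmem u hu)
  calc ‖(cyclicDefect F u - cyclicDefect F v - cyclicDifference _ (u - v)) i‖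
    _ = ‖F i (u i) - F i (v i) - F' i (y i) (u i - v i)‖ := by
      rw [← norm_neg]
      simp only [Pi.sub_apply, cyclicDefect, cyclicDifference_apply]
      congr 1
      abel
    _ ≤ η * ‖u i - v i‖ := hFi
    _ ≤ η * ‖u - v‖ := by
      gcongr
      exact norm_le_pi_norm (u - v) i

theorem exists_forall_norm_sub_le_of_uniformContinuous {ι V W : Type*} [Finite ι]
    [SeminormedAddCommGroup V] [SeminormedAddCommGroup W] {g : ι → V → W}
    (hg : ∀ i, UniformContinuous (g i)) {η : ℝ} (hη : 0 < η) :
    ∃ ε > 0, ∀ i x y, ‖x - y‖ ≤ ε → ‖g i x - g i y‖ ≤ η := by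
  cases nonempty_fintype ι
  obtain ⟨ε, hε, hgε⟩ := Metric.uniformContinuous_iff.1 (uniformContinuous_pi.2 hg) η hη
  refine ⟨ε / 2, half_pos hε, fun i x y hxy => ?_⟩
  rw [← dist_eq_norm] at hxy ⊢
  exact (dist_le_pi_dist (fun i => g i x) (fun i => g i y) i).trans
    (hgε (hxy.trans_lt (half_lt_self hε))).le

theorem RobustExpDichotomy.cyclic_shadowing [CompleteSpace X] {A : ℤ → X →L[ℝ] X} {c : ℝ}
    (h : RobustExpDichotomy A c) (hA : ∀ n, IsUnit (A n))
    (hF : ∀ i x, HasFDerivAt (F i) (F' i x) x) (hFc : ∀ (n : ℤ) x, ‖A n - F' n x‖ ≤ c)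
    (hF' : ∀ i, UniformContinuous (F' i)) :
    ∃ L > (0 : ℝ), ∃ ε₀ > (0 : ℝ), ∀ ε : ℝ, 0 < ε → ε ≤ ε₀ →
      ∀ y : ZMod N → X, ‖cyclicDefect F y‖ ≤ L * ε →
        ∃ x, cyclicDefect F x = 0 ∧ ‖x - y‖ ≤ ε := by
  obtain ⟨K, hK, hright⟩ := h.exists_nonlinearRightInverse (N := N) hA
  obtain ⟨ε₀, hε₀, hmodulus⟩ :=
    exists_forall_norm_sub_le_of_uniformContinuous hF' (η := (K⁻¹ / 2 : ℝ≥0)) (by positivity)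
  refine ⟨(K⁻¹ / 2 : ℝ≥0), by positivity, ε₀, hε₀, fun ε hε hεε₀ y hy => ?_⟩
  obtain ⟨R, rfl⟩ := hright (fun i => F' i (y i)) fun n => hFc n (y n)
  have happrox := approximatesLinearOn_cyclicDefect hF (y := y) (ε := ε) fun i x hx =>
    hmodulus i x (y i) ((mem_closedBall_iff_norm.1 hx).trans hεε₀)
  have hzero : 0 ∈ closedBall (cyclicDefect F y)
      (((R.nnnorm : ℝ)⁻¹ - (R.nnnorm⁻¹ / 2 : ℝ≥0)) * ε) := by
    rw [mem_closedBall, dist_zero_left]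
    simpa [sub_half] using hy
  obtain ⟨x, hx, hx0⟩ :=
    happrox.surjOn_closedBall_of_nonlinearRightInverse R hε.le Subset.rfl hzero
  exact ⟨x, hx0, mem_closedBall_iff_norm.1 hx⟩

end Shadowing

theorem periodic_shadowing_general {X : Type*} [NormedAddCommGroup X] [NormedSpace ℝ X]
    [CompleteSpace X] (A : ℤ → X ≃L[ℝ] X) (c : ℝ)
    (hrobust : RobustExpDichotomy (fun m => (A m : X →L[ℝ] X)) c)
    (F : ℤ → X → X) (F' : ℤ → X → X →L[ℝ] X) (hF : ∀ n x, HasFDerivAt (F n) (F' n x) x)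
    (hFc : ∀ n x, ‖(A n : X →L[ℝ] X) - F' n x‖ ≤ c) (hF' : ∀ n, UniformContinuous (F' n))
    (N : ℕ) (hN : 0 < N) (hper : ∀ n x, F (n + N) x = F n x) :
    ∃ L > (0 : ℝ), ∃ ε₀ > (0 : ℝ), ∀ ε : ℝ, 0 < ε → ε ≤ ε₀ →
      ∀ y : ℤ → X, (∀ n, y (n + N) = y n) → (∀ n, ‖y (n + 1) - F n (y n)‖ ≤ L * ε) →
        ∃ x : ℤ → X, (∀ n, x (n + 1) = F n (x n)) ∧ (∀ n, x (n + N) = x n) ∧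
          ∀ n, ‖x n - y n‖ ≤ ε := by
  have : NeZero N := ⟨hN.ne'⟩
  have hFper : Function.Periodic F N := fun n => funext (hper n)
  have hF'per : Function.Periodic F' N := fun n => funext fun x =>
    (hFper n ▸ hF (n + N) x).unique (hF n x)
  obtain ⟨F, rfl⟩ := exists_zmod_of_periodic hFper
  obtain ⟨F', rfl⟩ := exists_zmod_of_periodic hF'per
  obtain ⟨L, hL, ε₀, hε₀, hshadow⟩ := hrobust.cyclic_shadowing
    (fun n => (A n).toUnit.isUnit) (ZMod.intCast_surjective.forall.2 hF) hFc
    (ZMod.intCast_surjective.forall.2 hF')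
  refine ⟨L, hL, ε₀, hε₀, fun ε hε hεε₀ y hyper hy => ?_⟩
  obtain ⟨y, rfl⟩ := exists_zmod_of_periodic hyper
  have hdefect : ‖cyclicDefect F y‖ ≤ L * ε :=
    (pi_norm_le_iff_of_nonempty _).2 (ZMod.intCast_surjective.forall.2 fun n => by
      simpa [cyclicDefect] using hy n)
  obtain ⟨x, hx, hxy⟩ := hshadow ε hε hεε₀ y hdefect
  refine ⟨fun n => x n, fun n => ?_, fun n => by simp, fun n =>
    (norm_le_pi_norm (x - y) n).trans hxy⟩
  simpa [cyclicDefect] using sub_eq_zero.1 (congrFun hx n)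

/-- Anosov closing lemma for periodic nonautonomous systems: `N`-periodic pseudotrajectories
are shadowed by `N`-periodic true trajectories. -/
theorem periodic_shadowing {X : Type*} [NormedAddCommGroup X]
    [NormedSpace ℝ X] [CompleteSpace X]
    (A : ℤ → X ≃L[ℝ] X) (M : ℝ) (hM : ∀ m, ‖(A m : X →L[ℝ] X)‖ ≤ M)
    (hED : ExpDichotomy fun m => (A m : X →L[ℝ] X))
    (c : ℝ) (hc : 0 < c)
    (hrobust : ∀ B : ℤ → X →L[ℝ] X,
      (∀ m, ‖(A m : X →L[ℝ] X) - B m‖ ≤ c) → ExpDichotomy B)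
    (f : ℤ → X → X) (f' : ℤ → X → X →L[ℝ] X)
    (hdf : ∀ n x, HasFDerivAt (f n) (f' n x) x)
    (hfc : ∀ n x, ‖f' n x‖ ≤ c)
    (Mf : ℝ) (hMf : ∀ n x, ‖f n x‖ ≤ Mf)
    (D r : ℝ) (hD : 0 < D) (hr : 0 < r)
    (hHolder : ∀ n x y, ‖f' n x - f' n y‖ ≤ D * ‖x - y‖ ^ r)
    (N : ℕ) (hN : 0 < N)
    (hper : ∀ (n : ℤ) (x : X), A (n + N) x + f (n + N) x = A n x + f n x) :
    ∃ L > (0 : ℝ), ∃ ε₀ > (0 : ℝ), ∀ ε : ℝ, 0 < ε → ε ≤ ε₀ →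
      ∀ y : ℤ → X, (∀ n, y (n + N) = y n) →
        (∀ n, ‖y (n + 1) - (A n (y n) + f n (y n))‖ ≤ L * ε) →
        ∃ x : ℤ → X, (∀ n, x (n + 1) = A n (x n) + f n (x n)) ∧
          (∀ n, x (n + N) = x n) ∧ ∀ n, ‖x n - y n‖ ≤ ε := by
  lift D to ℝ≥0 using hD.le
  lift r to ℝ≥0 using hr.le
  refine periodic_shadowing_general A c hrobust (fun n x => A n x + f n x)
    (fun n x => A n + f' n x) (fun n x => (A n).hasFDerivAt.add (hdf n x)) (fun n x => ?_)
    (fun n => ?_) N hN hper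
  · simpa using hfc n x
  · have hHolderWith : HolderWith D r fun x => (A n : X →L[ℝ] X) + f' n x :=
      holderWith_of_norm_sub_le_mul_rpow fun x y => by
        simpa only [add_sub_add_left_eq_sub] using hHolder n x y
    exact hHolderWith.uniformContinuous hr
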